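/- Assume ν is infinitesimally invariant for N₀, i.e. ∫_H N₀φ dν = 0 for every cylinder function φ. Let M > 0 and let v : H → H be Borel measurable with |v(x)|_H ≤ M for ν-a.e. x. Then for every cylinder function φ and every λ > 0, ∫_H (⟨v, Q^{1/2}Dφ⟩(x))² ν(dx) ≤ −2M² ∫_H φ N₀φ dν ≤ 2M² ( λ^{-1} ∫_H (N₀φ)² dν + λ ∫_H φ² dν ). -/

import Mathlib

open MeasureTheory
open scoped InnerProductSpace BigOperators

/-- The coordinate map `x ↦ (⟪x, e 1⟫, …, ⟪x, e n⟫)` of a cylinder function. -/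
noncomputable def coords {H : Type*} [NormedAddCommGroup H] [InnerProductSpace ℝ H]
    (e : ℕ → H) (n : ℕ) (x : H) : Fin n → ℝ :=
  fun i => ⟪x, e i.1⟫_ℝ

/-- The `i`-th partial derivative of `f : ℝⁿ → ℝ`. -/
noncomputable def pd {n : ℕ} (f : (Fin n → ℝ) → ℝ) (i : Fin n) (y : Fin n → ℝ) : ℝ :=
  fderiv ℝ f y (Pi.single i 1)

/-- The second partial derivative `∂_{ii} f` of `f : ℝⁿ → ℝ`. -/
noncomputable def pd2 {n : ℕ} (f : (Fin n → ℝ) → ℝ) (i : Fin n) (y : Fin n → ℝ) : ℝ :=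
  fderiv ℝ (fun z => pd f i z) y (Pi.single i 1)

/-- `f ∈ C_b²(ℝⁿ)`: twice continuously differentiable with bounded derivatives
up to order 2. -/
def CbTwo {n : ℕ} (f : (Fin n → ℝ) → ℝ) : Prop :=
  ContDiff ℝ 2 f ∧ ∀ k : ℕ, k ≤ 2 → ∃ C : ℝ, ∀ y, ‖iteratedFDeriv ℝ k f y‖ ≤ C

/-- The Kolmogorov operator `N₀` applied to the cylinder function
`φ(x) = f(⟪x,e 1⟫, …, ⟪x,e n⟫)`:
`N₀φ(x) = (1/2) Σ_i q_i ∂_{ii} f + Σ_i a_i(x) ∂_i f`. -/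
noncomputable def KolmN0 {H : Type*} [NormedAddCommGroup H] [InnerProductSpace ℝ H]
    (e : ℕ → H) (q : ℕ → ℝ) (a : ℕ → H → ℝ) {n : ℕ}
    (f : (Fin n → ℝ) → ℝ) (x : H) : ℝ :=
  (1/2) * ∑ i : Fin n, q i.1 * pd2 f i (coords e n x)
    + ∑ i : Fin n, a i.1 x * pd f i (coords e n x)


/-- The perturbation term `⟨v, Q^{1/2}Dφ⟩(x) = Σ_i q_i^{1/2} ⟪v x, e i⟫ ∂_i f`. -/
noncomputable def Pterm {H : Type*} [NormedAddCommGroup H] [InnerProductSpace ℝ H]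
    (e : ℕ → H) (q : ℕ → ℝ) (v : H → H) {n : ℕ}
    (f : (Fin n → ℝ) → ℝ) (x : H) : ℝ :=
  ∑ i : Fin n, Real.sqrt (q i.1) * ⟪v x, e i.1⟫_ℝ * pd f i (coords e n x)

section helpers
variable {n : ℕ} {f : (Fin n → ℝ) → ℝ}

lemma pd_contDiff (hf : CbTwo f) (i : Fin n) : ContDiff ℝ 1 (pd f i) := by
  have h : ContDiff ℝ 1 (fderiv ℝ f) := hf.1.fderiv_right (by norm_num)
  exact h.clm_apply contDiff_const

lemma pd2_continuous (hf : CbTwo f) (i : Fin n) : Continuous (pd2 f i) := by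
  have h : Continuous (fderiv ℝ (pd f i)) := (pd_contDiff hf i).continuous_fderiv (by norm_num)
  exact h.clm_apply continuous_const

lemma pd2_eq (hf : CbTwo f) (i : Fin n) (y : Fin n → ℝ) :
    pd2 f i y = iteratedFDeriv ℝ 2 f y (fun _ => Pi.single i 1) := by
  have h : ContDiff ℝ 1 (fderiv ℝ f) := hf.1.fderiv_right (by norm_num)
  have hd : DifferentiableAt ℝ (fderiv ℝ f) y := (h.differentiable (by norm_num)) y
  rw [iteratedFDeriv_two_apply]
  unfold pd2 pd
  rw [fderiv_clm_apply hd (differentiableAt_const _)]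
  simp

lemma cb0 (hf : CbTwo f) : ∃ C, ∀ y, ‖f y‖ ≤ C := by
  obtain ⟨C, hC⟩ := hf.2 0 (by norm_num)
  exact ⟨C, fun y => by simpa using hC y⟩

lemma cb1 (hf : CbTwo f) (i : Fin n) : ∃ C, ∀ y, ‖pd f i y‖ ≤ C := by
  obtain ⟨C, hC⟩ := hf.2 1 (by norm_num)
  refine ⟨C, fun y => ?_⟩
  have := (iteratedFDeriv ℝ 1 f y).le_opNorm (fun _ => Pi.single i 1)
  rw [iteratedFDeriv_one_apply] at this
  refine this.trans ?_
  simpa [Pi.norm_single] using hC y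

lemma cb2 (hf : CbTwo f) (i : Fin n) : ∃ C, ∀ y, ‖pd2 f i y‖ ≤ C := by
  obtain ⟨C, hC⟩ := hf.2 2 (by norm_num)
  refine ⟨C, fun y => ?_⟩
  rw [pd2_eq hf]
  refine ((iteratedFDeriv ℝ 2 f y).le_opNorm (fun _ => Pi.single i 1)).trans ?_
  simpa [Pi.norm_single] using hC y

lemma cb_sq (hf : CbTwo f) : CbTwo (fun y => f y * f y) := by
  refine ⟨hf.1.mul hf.1, fun k hk => ?_⟩
  have h : ∀ j : ℕ, ∃ C : ℝ, j ≤ 2 → ∀ y, ‖iteratedFDeriv ℝ j f y‖ ≤ C := by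
    intro j
    by_cases hj : j ≤ 2
    · obtain ⟨C, hC⟩ := hf.2 j hj
      exact ⟨C, fun _ => hC⟩
    · exact ⟨0, fun h => absurd h hj⟩
  choose C hC using h
  refine ⟨∑ i ∈ Finset.range (k + 1), (k.choose i : ℝ) * C i * C (k - i), fun y => ?_⟩
  refine (norm_iteratedFDeriv_mul_le hf.1 hf.1 y (n := k) (by exact_mod_cast hk)).trans ?_
  refine Finset.sum_le_sum fun i hi => ?_
  have hi' : i ≤ 2 := by have := Finset.mem_range.1 hi; omega
  have h1 := hC i hi' y
  have h2 := hC (k - i) (by omega) y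
  have h0 : 0 ≤ C i := (norm_nonneg _).trans h1
  gcongr

lemma pd_sq (hf : CbTwo f) (i : Fin n) (y : Fin n → ℝ) :
    pd (fun y => f y * f y) i y = 2 * (f y * pd f i y) := by
  have hd : DifferentiableAt ℝ f y := hf.1.differentiable (by norm_num) y
  unfold pd
  rw [fderiv_fun_mul hd hd]
  simp
  ring

lemma pd2_sq (hf : CbTwo f) (i : Fin n) (y : Fin n → ℝ) :
    pd2 (fun y => f y * f y) i y = 2 * (f y * pd2 f i y) + 2 * (pd f i y) ^ 2 := by
  have hd : DifferentiableAt ℝ f y := hf.1.differentiable (by norm_num) y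
  have hp : DifferentiableAt ℝ (pd f i) y := (pd_contDiff hf i).differentiable (by norm_num) y
  have e1 : (fun z => pd (fun y => f y * f y) i z) = fun z => 2 * (f z * pd f i z) := by
    funext z; exact pd_sq hf i z
  unfold pd2
  rw [e1, fderiv_const_mul (hd.fun_mul hp), fderiv_fun_mul hd hp]
  simp only [smul_apply, add_apply, smul_eq_mul]
  change 2 * (f y * fderiv ℝ (pd f i) y (Pi.single i 1) + pd f i y * pd f i y) = _
  ring

end helpers

/-- If `ν` is infinitesimally invariant for `N₀` and `v` is a bounded Borel
vector field, then for every cylinder function `φ` and every `λ > 0`,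
`∫ ⟨v, Q^{1/2}Dφ⟩² dν ≤ −2M² ∫ φ N₀φ dν ≤ 2M² (λ⁻¹ ∫ (N₀φ)² dν + λ ∫ φ² dν)`. -/
theorem perturbation_estimate
    {H : Type*} [NormedAddCommGroup H] [InnerProductSpace ℝ H]
    [MeasurableSpace H] [BorelSpace H] [SecondCountableTopology H]
    (ν : Measure H) [IsProbabilityMeasure ν]
    (e : ℕ → H) (he : Orthonormal ℝ e)
    (q : ℕ → ℝ) (hq : ∀ i, 0 < q i)
    (a : ℕ → H → ℝ) (ha : ∀ i, Measurable (a i))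
    (ha2 : ∀ i, Integrable (fun x => (a i x) ^ 2) ν)
    (hinv : ∀ (n : ℕ), 1 ≤ n → ∀ f : (Fin n → ℝ) → ℝ, CbTwo f →
      ∫ x, KolmN0 e q a f x ∂ν = 0)
    (M : ℝ) (hM : 0 < M)
    (v : H → H) (hv : Measurable v) (hvbdd : ∀ᵐ x ∂ν, ‖v x‖ ≤ M)
    (n : ℕ) (hn : 1 ≤ n) (f : (Fin n → ℝ) → ℝ) (hf : CbTwo f)
    (lam : ℝ) (hlam : 0 < lam) :
    (∫ x, (Pterm e q v f x) ^ 2 ∂ν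
        ≤ -(2 * M ^ 2) * ∫ x, f (coords e n x) * KolmN0 e q a f x ∂ν) ∧
    (-(2 * M ^ 2) * ∫ x, f (coords e n x) * KolmN0 e q a f x ∂ν
        ≤ 2 * M ^ 2 * (lam⁻¹ * ∫ x, (KolmN0 e q a f x) ^ 2 ∂ν
            + lam * ∫ x, (f (coords e n x)) ^ 2 ∂ν)) := by
  have hcm : Measurable (coords e n) := by
    refine measurable_pi_lambda _ fun i => ?_
    exact (continuous_id.inner continuous_const).measurable
  have hB : ∀ (p : ENNReal) (g : (Fin n → ℝ) → ℝ), Continuous g → (∃ C, ∀ y, ‖g y‖ ≤ C) →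
      MemLp (fun x => g (coords e n x)) p ν := by
    rintro p g hg ⟨C, hC⟩
    exact MemLp.of_bound (hg.measurable.comp hcm).aestronglyMeasurable C
      (Filter.Eventually.of_forall fun x => hC _)
  have hfc : Continuous f := hf.1.continuous
  have hfL : ∀ p, MemLp (fun x => f (coords e n x)) p ν := fun p => hB p f hfc (cb0 hf)
  have hpL : ∀ p i, MemLp (fun x => pd f i (coords e n x)) p ν :=
    fun p i => hB p _ (pd_contDiff hf i).continuous (cb1 hf i)
  have hp2L : ∀ p i, MemLp (fun x => pd2 f i (coords e n x)) p ν :=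
    fun p i => hB p _ (pd2_continuous hf i) (cb2 hf i)
  have haL : ∀ i, MemLp (a i) 2 ν := fun i =>
    (memLp_two_iff_integrable_sq (ha i).aestronglyMeasurable).2 (ha2 i)
  have hN : MemLp (fun x => KolmN0 e q a f x) 2 ν := by
    have t1 : ∀ i : Fin n, MemLp (fun x => q i.1 * pd2 f i (coords e n x)) 2 ν :=
      fun i => (hp2L 2 i).const_mul _
    have t2 : ∀ i : Fin n, MemLp (fun x => a i.1 x * pd f i (coords e n x)) 2 ν :=
      fun i => MemLp.mul' (p := 2) (q := ⊤) (hpL ⊤ i) (haL i)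
    have s1 : MemLp (fun x => ∑ i : Fin n, q i.1 * pd2 f i (coords e n x)) 2 ν :=
      memLp_finsetSum _ fun i _ => t1 i
    have s2 : MemLp (fun x => ∑ i : Fin n, a i.1 x * pd f i (coords e n x)) 2 ν :=
      memLp_finsetSum _ fun i _ => t2 i
    exact (s1.const_mul (1/2)).add s2
  have hfN : Integrable (fun x => f (coords e n x) * KolmN0 e q a f x) ν :=
    (hfL 2).integrable_mul hN
  have hG : Integrable (fun x => ∑ i : Fin n, q i.1 * (pd f i (coords e n x)) ^ 2) ν :=
    integrable_finsetSum _ fun i _ => ((hpL 2 i).integrable_sq).const_mul _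
  have key : ∀ x, KolmN0 e q a (fun y => f y * f y) x =
      2 * (f (coords e n x) * KolmN0 e q a f x)
        + ∑ i : Fin n, q i.1 * (pd f i (coords e n x)) ^ 2 := by
    intro x
    unfold KolmN0
    simp only [pd_sq hf, pd2_sq hf, mul_add, Finset.mul_sum, Finset.sum_add_distrib]
    rw [add_right_comm]
    congr 1
    · congr 1 <;> refine Finset.sum_congr rfl fun i _ => by ring
    · refine Finset.sum_congr rfl fun i _ => by ring
  have hint : ∫ x, (∑ i : Fin n, q i.1 * (pd f i (coords e n x)) ^ 2) ∂ν =
      -2 * ∫ x, f (coords e n x) * KolmN0 e q a f x ∂ν := by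
    have h := hinv n hn _ (cb_sq hf)
    simp_rw [key] at h
    rw [integral_add (hfN.const_mul 2) hG, integral_const_mul] at h
    linarith
  constructor
  · have h1 : ∫ x, (Pterm e q v f x) ^ 2 ∂ν ≤
        ∫ x, M ^ 2 * (∑ i : Fin n, q i.1 * (pd f i (coords e n x)) ^ 2) ∂ν := by
      refine integral_mono_of_nonneg (Filter.Eventually.of_forall fun x => sq_nonneg _)
        (hG.const_mul _) ?_
      filter_upwards [hvbdd] with x hx
      have hb : ∑ i : Fin n, ⟪v x, e i.1⟫_ℝ ^ 2 ≤ M ^ 2 := by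
        have ho : Orthonormal ℝ (fun i : Fin n => e i.1) := he.comp _ Fin.val_injective
        have := ho.sum_inner_products_le (v x) (s := Finset.univ)
        have h2 : ‖v x‖ ^ 2 ≤ M ^ 2 := by gcongr
        refine le_trans (le_of_eq ?_) (this.trans h2)
        refine Finset.sum_congr rfl fun i _ => ?_
        rw [Real.norm_eq_abs, sq_abs, real_inner_comm]
      have hcs := Finset.sum_mul_sq_le_sq_mul_sq Finset.univ
        (fun i : Fin n => ⟪v x, e i.1⟫_ℝ)
        (fun i : Fin n => Real.sqrt (q i.1) * pd f i (coords e n x))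
      have e1 : Pterm e q v f x = ∑ i : Fin n, ⟪v x, e i.1⟫_ℝ *
          (Real.sqrt (q i.1) * pd f i (coords e n x)) :=
        Finset.sum_congr rfl fun i _ => by ring
      have e2 : ∑ i : Fin n, (Real.sqrt (q i.1) * pd f i (coords e n x)) ^ 2 =
          ∑ i : Fin n, q i.1 * (pd f i (coords e n x)) ^ 2 :=
        Finset.sum_congr rfl fun i _ => by rw [mul_pow, Real.sq_sqrt (hq _).le]
      rw [← e1, e2] at hcs
      refine hcs.trans (mul_le_mul_of_nonneg_right hb ?_)
      exact Finset.sum_nonneg fun i _ => mul_nonneg (hq _).le (sq_nonneg _)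
    rw [integral_const_mul, hint] at h1
    linarith
  · have h2 : ∫ x, -(f (coords e n x) * KolmN0 e q a f x) ∂ν ≤
        ∫ x, (lam⁻¹ * (KolmN0 e q a f x) ^ 2 + lam * (f (coords e n x)) ^ 2) ∂ν := by
      refine integral_mono hfN.neg
        ((hN.integrable_sq.const_mul _).add ((hfL 2).integrable_sq.const_mul _)) fun x => ?_
      set F := f (coords e n x)
      set N := KolmN0 e q a f x
      have h3 : lam⁻¹ * N ^ 2 + lam * F ^ 2 + F * N =
          lam⁻¹ * ((N + lam * F / 2) ^ 2 + 3 / 4 * (lam * F) ^ 2) := by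
        field_simp
        ring
      have h4 : 0 ≤ lam⁻¹ * ((N + lam * F / 2) ^ 2 + 3 / 4 * (lam * F) ^ 2) := by positivity
      change -(F * N) ≤ lam⁻¹ * N ^ 2 + lam * F ^ 2
      linarith
    rw [integral_neg, integral_add (hN.integrable_sq.const_mul _)
      ((hfL 2).integrable_sq.const_mul _), integral_const_mul, integral_const_mul] at h2
    have h5 := mul_le_mul_of_nonneg_left h2 (by positivity : (0:ℝ) ≤ 2 * M ^ 2)
    linarith
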